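/- Consider the tensorized Hermite basis (h_n) of L²(ℝ³). There exists a constant C > 0 such that for all n: (i) ‖h_n‖_{L⁴(ℝ³)} ≤ C λ_n^{−1/4} (log λ_n)³, and (ii) ‖h_n‖_{L^∞(ℝ³)} ≤ C λ_n^{−1/6}. -/

import Mathlib

open MeasureTheory Complex Filter Set
open scoped ENNReal FourierTransform

noncomputable section

abbrev Rd (d : ℕ) := EuclideanSpace ℝ (Fin d)

/-- The one-dimensional Hermite function
`e_k(x) = (-1)^k (k!)^{-1/2} 2^{-k/2} π^{-1/4} e^{x²/2} (d^k/dx^k)(e^{-x²})`. -/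
def hermiteFun (k : ℕ) (x : ℝ) : ℝ :=
  (-1 : ℝ) ^ k *
    ((Nat.factorial k : ℝ) ^ (-(1/2 : ℝ)) * (2 : ℝ) ^ (-(k : ℝ)/2) *
      Real.pi ^ (-(1/4 : ℝ))) *
    Real.exp (x ^ 2 / 2) * iteratedDeriv k (fun y => Real.exp (-y ^ 2)) x

/-- The tensorized Hermite function on `ℝ³`: `h_n(x) = e_{n₁}(x₁)e_{n₂}(x₂)e_{n₃}(x₃)`. -/
def hermite3 (n : Fin 3 → ℕ) (x : Rd 3) : ℝ :=
  ∏ i, hermiteFun (n i) (x i)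

/-- The square root of the eigenvalue: `λ_n = √(2(n₁+n₂+n₃)+3)`. -/
def lam3 (n : Fin 3 → ℕ) : ℝ :=
  Real.sqrt (2 * (∑ i, (n i : ℝ)) + 3)

/-!
A one-dimensional Hermite function `u = e_k` solves `u'' = (x² - L²) u` with `L² = 2k + 1`. On
`[0, L)` the adiabatic invariant `s u² + u'² / s`, `s = √(L² - x²)`, corrected by the multiple
`x / s³` of `u u'`, changes by at most a bounded factor up to distance about `L^(-1/3)` from the
turning point `x = L`, and the three-term recurrence bounds it at `0` uniformly in `k`. Beyond `L`
the square `u²` is convex and decreases to `0`, which forces `u⁴` to decay. Together these give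
`u⁴ ≲ 1 / (L^(2/3) + L |x - L|)` for `0 ≤ x ≤ L` and quadratic decay on the scale `L^(-1/3)` beyond
`L`, hence `‖e_k‖_∞ ≲ L^(-1/6)` and `∫ e_k⁴ ≲ (1 + log L) / L`.

In the tensor product the factors multiply, and `λ² = ∑ i, (2 n i + 1) ≤ d ∏ i, (2 n i + 1)`
turns the product of the one-dimensional gains into a gain in `λ`.
-/

section WKB

variable {L x : ℝ} {u : ℝ → ℝ}

/-- The local frequency `√(L² - x²)` of the oscillator `u'' = (x² - L²) u` in its classically
allowed region `|x| < L`; it is `0` outside. -/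
def wkbFreq (L x : ℝ) : ℝ := √(L ^ 2 - x ^ 2)

theorem wkbFreq_sq (hx : x ^ 2 ≤ L ^ 2) : wkbFreq L x ^ 2 = L ^ 2 - x ^ 2 :=
  Real.sq_sqrt (sub_nonneg.2 hx)

theorem sq_lt_sq_of_wkbFreq_pos (hs : 0 < wkbFreq L x) : x ^ 2 < L ^ 2 :=
  sub_pos.1 (Real.sqrt_pos.1 hs)

theorem wkbFreq_zero (hL : 0 ≤ L) : wkbFreq L 0 = L := by
  rw [wkbFreq, zero_pow two_ne_zero, sub_zero, Real.sqrt_sq hL]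

theorem wkbFreq_le_wkbFreq {y : ℝ} (hy : 0 ≤ y) (hyx : y ≤ x) : wkbFreq L x ≤ wkbFreq L y :=
  Real.sqrt_le_sqrt (by gcongr)

theorem hasDerivAt_wkbFreq (hs : 0 < wkbFreq L x) :
    HasDerivAt (wkbFreq L) (-x / wkbFreq L x) x := by
  have hq : HasDerivAt (fun y : ℝ ↦ L ^ 2 - y ^ 2) (-(2 * x)) x := by
    simpa using (hasDerivAt_pow 2 x).const_sub (L ^ 2)
  refine (hq.sqrt (Real.sqrt_pos.1 hs).ne').congr_deriv ?_
  rw [wkbFreq, ← mul_neg, mul_div_mul_left _ _ two_ne_zero]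

theorem hasDerivAt_div_wkbFreq_pow_three (hs : 0 < wkbFreq L x) :
    HasDerivAt (fun y ↦ y / wkbFreq L y ^ 3)
      (1 / wkbFreq L x ^ 3 + 3 * x ^ 2 / wkbFreq L x ^ 5) x := by
  refine ((hasDerivAt_id x).div ((hasDerivAt_wkbFreq hs).pow 3) (pow_pos hs 3).ne').congr_deriv ?_
  simp only [id, Pi.pow_apply]
  push_cast
  field_simp
  ring

theorem wkbFreq_pos_and_le_pow_three (hL : 0 < L) (hLs : L ≤ wkbFreq L x ^ 3) {y : ℝ}
    (hy : y ∈ Icc 0 x) : 0 < wkbFreq L y ∧ y ≤ wkbFreq L y ^ 3 := by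
  have hs : L ≤ wkbFreq L y ^ 3 :=
    hLs.trans (pow_le_pow_left₀ (Real.sqrt_nonneg _) (wkbFreq_le_wkbFreq hy.1 hy.2) 3)
  have hpos : 0 < wkbFreq L y :=
    (Real.sqrt_nonneg _).lt_of_ne' fun h ↦ by
      rw [show wkbFreq L y = 0 from h] at hs
      linarith
  exact ⟨hpos, (lt_of_pow_lt_pow_left₀ 2 hL.le (sq_lt_sq_of_wkbFreq_pos hpos)).le.trans hs⟩

/-- `u` solves `u'' = (x² - L²) u` on the real line. -/
structure IsOscillatorSolution (L : ℝ) (u : ℝ → ℝ) : Prop where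
  differentiable : Differentiable ℝ u
  hasDerivAt_deriv : ∀ x, HasDerivAt (deriv u) ((x ^ 2 - L ^ 2) * u x) x

theorem IsOscillatorSolution.hasDerivAt (h : IsOscillatorSolution L u) (x : ℝ) :
    HasDerivAt u (deriv u x) x :=
  (h.differentiable x).hasDerivAt

/-- The leading-order adiabatic invariant `s u² + u'² / s`, `s = √(L² - x²)`, of a solution of
`u'' = (x² - L²) u` in the allowed region `|x| < L`. -/
def wkbEnergy (L : ℝ) (u : ℝ → ℝ) (x : ℝ) : ℝ :=
  wkbFreq L x * u x ^ 2 + deriv u x ^ 2 / wkbFreq L x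

/-- The WKB energy with its first adiabatic correction: the coefficient `x / s³` is chosen so that
the `u²` and `u'²` terms cancel in the derivative and only a multiple of `u u'` is left. -/
def correctedWKBEnergy (L : ℝ) (u : ℝ → ℝ) (x : ℝ) : ℝ :=
  wkbEnergy L u x - x / wkbFreq L x ^ 3 * (u x * deriv u x)

theorem wkbEnergy_nonneg (L : ℝ) (u : ℝ → ℝ) (x : ℝ) : 0 ≤ wkbEnergy L u x :=
  add_nonneg (mul_nonneg (Real.sqrt_nonneg _) (sq_nonneg _))
    (div_nonneg (sq_nonneg _) (Real.sqrt_nonneg _))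

theorem wkbFreq_mul_sq_le_wkbEnergy (L : ℝ) (u : ℝ → ℝ) (x : ℝ) :
    wkbFreq L x * u x ^ 2 ≤ wkbEnergy L u x :=
  le_add_of_nonneg_right (div_nonneg (sq_nonneg _) (Real.sqrt_nonneg _))

theorem wkbFreq_mul_wkbEnergy (hs : 0 < wkbFreq L x) :
    wkbFreq L x * wkbEnergy L u x = deriv u x ^ 2 + (L ^ 2 - x ^ 2) * u x ^ 2 := by
  rw [← wkbFreq_sq (sq_lt_sq_of_wkbFreq_pos hs).le, wkbEnergy]
  field_simp
  ring

theorem abs_mul_deriv_le_half_wkbEnergy (hs : 0 < wkbFreq L x) :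
    |u x * deriv u x| ≤ wkbEnergy L u x / 2 := by
  have hamgm : wkbFreq L x * (2 * |u x * deriv u x|) ≤ wkbFreq L x * wkbEnergy L u x :=
    calc wkbFreq L x * (2 * |u x * deriv u x|)
        = 2 * (wkbFreq L x * |u x|) * |deriv u x| := by rw [abs_mul]; ring
      _ ≤ (wkbFreq L x * |u x|) ^ 2 + |deriv u x| ^ 2 := two_mul_le_add_sq _ _
      _ = wkbFreq L x * wkbEnergy L u x := by
          rw [mul_pow, sq_abs, sq_abs, wkbEnergy]
          field_simp
  linarith [le_of_mul_le_mul_left hamgm hs]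

theorem half_wkbEnergy_le_correctedWKBEnergy (hs : 0 < wkbFreq L x) (hx : 0 ≤ x)
    (hxs : x ≤ wkbFreq L x ^ 3) : wkbEnergy L u x / 2 ≤ correctedWKBEnergy L u x := by
  have hcorr : x / wkbFreq L x ^ 3 * (u x * deriv u x) ≤ wkbEnergy L u x / 2 :=
    calc x / wkbFreq L x ^ 3 * (u x * deriv u x)
        ≤ x / wkbFreq L x ^ 3 * |u x * deriv u x| := by gcongr; exact le_abs_self _
      _ ≤ |u x * deriv u x| :=
          mul_le_of_le_one_left (abs_nonneg _) (div_le_one_of_le₀ hxs (pow_pos hs 3).le)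
      _ ≤ wkbEnergy L u x / 2 := abs_mul_deriv_le_half_wkbEnergy hs
  rw [correctedWKBEnergy]
  linarith

namespace IsOscillatorSolution

theorem hasDerivAt_correctedWKBEnergy (h : IsOscillatorSolution L u) (hs : 0 < wkbFreq L x) :
    HasDerivAt (correctedWKBEnergy L u)
      (-(1 / wkbFreq L x ^ 3 + 3 * x ^ 2 / wkbFreq L x ^ 5) * (u x * deriv u x)) x := by
  have hu := h.hasDerivAt x
  have hv := h.hasDerivAt_deriv x
  have hfreq := hasDerivAt_wkbFreq hs
  refine (((hfreq.mul (hu.pow 2)).add ((hv.pow 2).div hfreq hs.ne')).sub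
    ((hasDerivAt_div_wkbFreq_pow_three hs).mul (hu.mul hv))).congr_deriv ?_
  have hq : x ^ 2 - L ^ 2 = -wkbFreq L x ^ 2 := by
    rw [wkbFreq_sq (sq_lt_sq_of_wkbFreq_pos hs).le]
    ring
  rw [hq]
  simp only [Pi.pow_apply, Pi.mul_apply]
  push_cast
  field_simp
  ring

-- Grönwall: the derivative of the corrected energy is at most that of `y / s³` times the energy.
theorem antitoneOn_correctedWKBEnergy_mul_exp (h : IsOscillatorSolution L u) (hL : 0 < L)
    (hLs : L ≤ wkbFreq L x ^ 3) :
    AntitoneOn (fun y ↦ correctedWKBEnergy L u y * Real.exp (-(y / wkbFreq L y ^ 3)))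
      (Icc 0 x) := by
  have hderiv : ∀ y ∈ Icc 0 x, HasDerivAt
      (fun y ↦ correctedWKBEnergy L u y * Real.exp (-(y / wkbFreq L y ^ 3))) _ y := fun y hy ↦
    have hs := (wkbFreq_pos_and_le_pow_three hL hLs hy).1
    (h.hasDerivAt_correctedWKBEnergy hs).mul (hasDerivAt_div_wkbFreq_pow_three hs).neg.exp
  refine antitoneOn_of_hasDerivWithinAt_nonpos (convex_Icc _ _)
    (fun y hy ↦ (hderiv y hy).continuousAt.continuousWithinAt)
    (fun y hy ↦ (hderiv y (interior_subset hy)).hasDerivWithinAt) fun y hy ↦ ?_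
  replace hy := interior_subset hy
  obtain ⟨hs, hys⟩ := wkbFreq_pos_and_le_pow_three hL hLs hy
  have hrate : 0 ≤ (1 / wkbFreq L y ^ 3 + 3 * y ^ 2 / wkbFreq L y ^ 5) *
      Real.exp (-(y / wkbFreq L y ^ 3)) := by positivity
  have hle : -(u y * deriv u y) ≤ correctedWKBEnergy L u y :=
    (neg_le_abs _).trans ((abs_mul_deriv_le_half_wkbEnergy hs).trans
      (half_wkbEnergy_le_correctedWKBEnergy hs hy.1 hys))
  simp only [Pi.neg_apply]
  linarith [mul_le_mul_of_nonneg_left hle hrate]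

theorem wkbEnergy_le (h : IsOscillatorSolution L u) (hL : 0 < L) (hx : 0 ≤ x)
    (hLs : L ≤ wkbFreq L x ^ 3) : wkbEnergy L u x ≤ 6 * wkbEnergy L u 0 := by
  obtain ⟨hs, hxs⟩ := wkbFreq_pos_and_le_pow_three hL hLs ⟨hx, le_rfl⟩
  have hanti : correctedWKBEnergy L u x * Real.exp (-(x / wkbFreq L x ^ 3)) ≤
      wkbEnergy L u 0 := by
    simpa [correctedWKBEnergy] using
      h.antitoneOn_correctedWKBEnergy_mul_exp hL hLs ⟨le_rfl, hx⟩ ⟨hx, le_rfl⟩ hx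
  have hexp : (1 / 3 : ℝ) ≤ Real.exp (-(x / wkbFreq L x ^ 3)) :=
    calc (1 / 3 : ℝ) ≤ Real.exp (-1) := by
          rw [Real.exp_neg, one_div]
          exact inv_anti₀ (Real.exp_pos 1) Real.exp_one_lt_three.le
      _ ≤ _ := Real.exp_le_exp.2 (neg_le_neg (div_le_one_of_le₀ hxs (pow_pos hs 3).le))
  have hhalf : wkbEnergy L u x / 2 ≤ correctedWKBEnergy L u x :=
    half_wkbEnergy_le_correctedWKBEnergy hs hx hxs
  have := mul_le_mul hhalf hexp (by norm_num)
    ((div_nonneg (wkbEnergy_nonneg L u x) zero_le_two).trans hhalf)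
  linarith

theorem antitoneOn_deriv_sq_add (h : IsOscillatorSolution L u) :
    AntitoneOn (fun y ↦ deriv u y ^ 2 + (L ^ 2 - y ^ 2) * u y ^ 2) (Ici 0) := by
  have hderiv : ∀ y, HasDerivAt (fun y ↦ deriv u y ^ 2 + (L ^ 2 - y ^ 2) * u y ^ 2)
      (-(2 * y * u y ^ 2)) y := fun y ↦ by
    refine (((h.hasDerivAt_deriv y).pow 2).add (((hasDerivAt_pow 2 y).const_sub (L ^ 2)).mul
      ((h.hasDerivAt y).pow 2))).congr_deriv ?_
    simp only [Pi.pow_apply]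
    push_cast
    ring
  refine antitoneOn_of_hasDerivWithinAt_nonpos (convex_Ici _)
    (fun y _ ↦ (hderiv y).continuousAt.continuousWithinAt)
    (fun y _ ↦ (hderiv y).hasDerivWithinAt) fun y hy ↦ ?_
  have hy0 : 0 ≤ y := interior_subset hy
  exact neg_nonpos.2 (by positivity)

end IsOscillatorSolution

end WKB

section TurningPoint

variable {L a x : ℝ} {u : ℝ → ℝ}

theorem exists_wkbFreq_eq (ha : 1 ≤ a) :
    ∃ b, 0 ≤ b ∧ a ^ 3 - 1 / a ≤ b ∧ wkbFreq (a ^ 3) b = a := by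
  have ha0 : 0 < a := by linarith
  have hpow : a ^ 2 ≤ (a ^ 3) ^ 2 := by
    rw [← pow_mul]
    exact pow_le_pow_right₀ ha (by norm_num)
  refine ⟨√((a ^ 3) ^ 2 - a ^ 2), Real.sqrt_nonneg _, Real.le_sqrt_of_sq_le ?_, ?_⟩
  · have hinv : (1 / a) ^ 2 ≤ a ^ 2 := by
      refine pow_le_pow_left₀ (by positivity) ?_ 2
      exact (div_le_one_of_le₀ ha ha0.le).trans ha
    have hexp : (a ^ 3 - 1 / a) ^ 2 = (a ^ 3) ^ 2 - 2 * a ^ 2 + (1 / a) ^ 2 := by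
      field_simp
      ring
    linarith
  · rw [wkbFreq, Real.sq_sqrt (sub_nonneg.2 hpow), sub_sub_cancel, Real.sqrt_sq ha0.le]

namespace IsOscillatorSolution

theorem abs_sub_le_of_deriv_sq_add_le (h : IsOscillatorSolution L u) {b E : ℝ} (hb : 0 ≤ b)
    (hbx : b ≤ x) (hxL : x ≤ L) (hE : deriv u b ^ 2 + (L ^ 2 - b ^ 2) * u b ^ 2 ≤ E) :
    |u x - u b| ≤ √E * (x - b) := by
  have hslope : ∀ y ∈ Icc b x, ‖deriv u y‖ ≤ √E := fun y hy ↦ by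
    have hy0 : 0 ≤ y := hb.trans hy.1
    have hq : 0 ≤ (L ^ 2 - y ^ 2) * u y ^ 2 :=
      mul_nonneg (sub_nonneg.2 (pow_le_pow_left₀ hy0 (hy.2.trans hxL) 2)) (sq_nonneg _)
    exact Real.abs_le_sqrt
      (by linarith [h.antitoneOn_deriv_sq_add (mem_Ici.2 hb) (mem_Ici.2 hy0) hy.1])
  simpa only [Real.norm_eq_abs, abs_of_nonneg (sub_nonneg.2 hbx)] using
    (convex_Icc b x).norm_image_sub_le_of_norm_hasDerivWithin_le
      (fun y _ ↦ (h.hasDerivAt y).hasDerivWithinAt) hslope ⟨le_rfl, hbx⟩ ⟨hbx, le_rfl⟩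

-- Writing `L = a ^ 3`, WKB breaks down only within `1 / a = L ^ (-1/3)` of the turning point, and
-- there the slope of `u` is bounded because `u'² + (L² - x²) u²` is nonincreasing.
theorem sq_mul_le_of_wkbFreq_le (h : IsOscillatorSolution (a ^ 3) u) (ha : 1 ≤ a) (hx : 0 ≤ x)
    (hxL : x ≤ a ^ 3) (hs : wkbFreq (a ^ 3) x ≤ a) :
    u x ^ 2 * a ≤ 24 * wkbEnergy (a ^ 3) u 0 := by
  have ha0 : 0 < a := by linarith
  obtain ⟨b, hb, hLb, hsb⟩ := exists_wkbFreq_eq ha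
  set E := wkbEnergy (a ^ 3) u 0
  have hE : 0 ≤ E := wkbEnergy_nonneg (a ^ 3) u 0
  have hbE : wkbEnergy (a ^ 3) u b ≤ 6 * E :=
    h.wkbEnergy_le (pow_pos ha0 3) hb (by rw [hsb])
  have hub : a * u b ^ 2 ≤ 6 * E := by
    simpa only [hsb] using (wkbFreq_mul_sq_le_wkbEnergy (a ^ 3) u b).trans hbE
  rcases le_total x b with hxb | hbx
  · have hsx : wkbFreq (a ^ 3) x = a :=
      hs.antisymm (hsb.ge.trans (wkbFreq_le_wkbFreq hx hxb))
    have hux : wkbFreq (a ^ 3) x * u x ^ 2 ≤ 6 * E :=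
      (wkbFreq_mul_sq_le_wkbEnergy _ u x).trans
        (h.wkbEnergy_le (pow_pos ha0 3) hx (by rw [hsx]))
    rw [hsx] at hux
    linarith
  have henergy : deriv u b ^ 2 + ((a ^ 3) ^ 2 - b ^ 2) * u b ^ 2 ≤ a * (6 * E) := by
    rw [← wkbFreq_mul_wkbEnergy (by rwa [hsb]), hsb]
    gcongr
  have hdiff : a * (u x - u b) ^ 2 ≤ 6 * E := by
    have hle : |u x - u b| ≤ √(a * (6 * E)) * (1 / a) :=
      (h.abs_sub_le_of_deriv_sq_add_le hb hbx hxL henergy).trans (by gcongr; linarith)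
    calc a * (u x - u b) ^ 2 ≤ a * (√(a * (6 * E)) * (1 / a)) ^ 2 := by
          rw [← sq_abs (u x - u b)]
          gcongr
      _ = 6 * E := by
          rw [mul_pow, Real.sq_sqrt (by positivity)]
          field_simp
  calc u x ^ 2 * a ≤ 2 * ((u x - u b) ^ 2 + u b ^ 2) * a := by
        gcongr
        simpa using add_sq_le (a := u x - u b) (b := u b)
    _ ≤ 24 * E := by linarith

theorem pow_four_mul_le_of_le (h : IsOscillatorSolution (a ^ 3) u) (ha : 1 ≤ a) (hx : 0 ≤ x)
    (hxL : x ≤ a ^ 3) :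
    u x ^ 4 * (a ^ 2 * (1 + a * (a ^ 3 - x))) ≤ 1152 * wkbEnergy (a ^ 3) u 0 ^ 2 := by
  have ha0 : 0 < a := by linarith
  have hxL2 : x ^ 2 ≤ (a ^ 3) ^ 2 := pow_le_pow_left₀ hx hxL 2
  have hweight : a ^ 2 * (1 + a * (a ^ 3 - x)) ≤ a ^ 2 + wkbFreq (a ^ 3) x ^ 2 := by
    rw [wkbFreq_sq hxL2]
    nlinarith [mul_nonneg hx (sub_nonneg.2 hxL)]
  have hE := wkbEnergy_nonneg (a ^ 3) u 0
  have hs0 : 0 ≤ wkbFreq (a ^ 3) x := Real.sqrt_nonneg _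
  have hmax : u x ^ 2 * max a (wkbFreq (a ^ 3) x) ≤ 24 * wkbEnergy (a ^ 3) u 0 := by
    rcases le_total (wkbFreq (a ^ 3) x) a with hs | hs
    · rw [max_eq_left hs]
      exact h.sq_mul_le_of_wkbFreq_le ha hx hxL hs
    · rw [max_eq_right hs]
      linarith [wkbFreq_mul_sq_le_wkbEnergy (a ^ 3) u x,
        h.wkbEnergy_le (pow_pos ha0 3) hx (pow_le_pow_left₀ ha0.le hs 3)]
  calc u x ^ 4 * (a ^ 2 * (1 + a * (a ^ 3 - x)))
      ≤ u x ^ 4 * (max a (wkbFreq (a ^ 3) x) ^ 2 + max a (wkbFreq (a ^ 3) x) ^ 2) := by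
        refine mul_le_mul_of_nonneg_left (hweight.trans ?_) (by positivity)
        gcongr
        · exact le_max_left _ _
        · exact le_max_right _ _
    _ = 2 * (u x ^ 2 * max a (wkbFreq (a ^ 3) x)) ^ 2 := by ring
    _ ≤ 2 * (24 * wkbEnergy (a ^ 3) u 0) ^ 2 := by gcongr
    _ = 1152 * wkbEnergy (a ^ 3) u 0 ^ 2 := by ring

end IsOscillatorSolution

/-- A solution of `u'' = (x² - L²) u` that is recessive at `+∞`; decay of `x u` and `u'` is what
the energy arguments beyond the turning point use. -/
structure IsDecayingOscillatorSolution (L : ℝ) (u : ℝ → ℝ) : Prop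
    extends IsOscillatorSolution L u where
  tendsto_id_mul : Tendsto (fun x ↦ x * u x) atTop (nhds 0)
  tendsto_deriv : Tendsto (deriv u) atTop (nhds 0)

namespace IsDecayingOscillatorSolution

theorem tendsto (h : IsDecayingOscillatorSolution L u) : Tendsto u atTop (nhds 0) := by
  have hinv := tendsto_inv_atTop_zero.mul h.tendsto_id_mul
  rw [mul_zero] at hinv
  refine hinv.congr' ?_
  filter_upwards [eventually_gt_atTop 0] with y hy
  field_simp

theorem monotoneOn_mul_deriv (h : IsDecayingOscillatorSolution L u) (hL : 0 ≤ L) :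
    MonotoneOn (fun x ↦ u x * deriv u x) (Ici L) := by
  have hderiv := fun y ↦ (h.hasDerivAt y).mul (h.hasDerivAt_deriv y)
  refine monotoneOn_of_hasDerivWithinAt_nonneg (convex_Ici _)
    (fun y _ ↦ (hderiv y).continuousAt.continuousWithinAt)
    (fun y _ ↦ (hderiv y).hasDerivWithinAt) fun y hy ↦ ?_
  have hq : 0 ≤ y ^ 2 - L ^ 2 := sub_nonneg.2 (pow_le_pow_left₀ hL (interior_subset hy) 2)
  linarith [mul_nonneg hq (sq_nonneg (u y)), sq_nonneg (deriv u y)]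

theorem mul_deriv_nonpos (h : IsDecayingOscillatorSolution L u) (hL : 0 ≤ L) (hx : L ≤ x) :
    u x * deriv u x ≤ 0 := by
  have hlim : Tendsto (fun y ↦ u y * deriv u y) atTop (nhds 0) := by
    simpa using h.tendsto.mul h.tendsto_deriv
  refine ge_of_tendsto hlim ?_
  filter_upwards [eventually_ge_atTop x] with y hy
  exact h.monotoneOn_mul_deriv hL hx (hx.trans hy) hy

theorem mul_sq_le_deriv_sq (h : IsDecayingOscillatorSolution L u) (hx : 0 ≤ x) :
    (x ^ 2 - L ^ 2) * u x ^ 2 ≤ deriv u x ^ 2 := by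
  have hlim : Tendsto (fun y ↦ deriv u y ^ 2 + (L ^ 2 - y ^ 2) * u y ^ 2) atTop (nhds 0) := by
    have hsum := (h.tendsto_deriv.pow 2).add
      (((h.tendsto.pow 2).const_mul (L ^ 2)).sub (h.tendsto_id_mul.pow 2))
    simp only [zero_pow two_ne_zero, mul_zero, sub_zero, add_zero] at hsum
    exact hsum.congr fun y ↦ by ring
  have hnonneg : 0 ≤ deriv u x ^ 2 + (L ^ 2 - x ^ 2) * u x ^ 2 := by
    refine le_of_tendsto hlim ?_
    filter_upwards [eventually_ge_atTop x] with y hy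
    exact h.antitoneOn_deriv_sq_add (mem_Ici.2 hx) (mem_Ici.2 (hx.trans hy)) hy
  linarith

-- Convexity of `u²` beyond the turning point: it lies above its tangent at `x`.
theorem sq_add_tangent_le (h : IsDecayingOscillatorSolution L u) (hL : 0 ≤ L) (hx : L ≤ x) :
    u x ^ 2 + 2 * (x - L) * -(u x * deriv u x) ≤ u L ^ 2 := by
  have hderiv := fun y ↦ ((h.hasDerivAt y).pow 2).sub
    ((hasDerivAt_id y).mul_const (2 * (u x * deriv u x)))
  have hanti : AntitoneOn (fun y ↦ u y ^ 2 - y * (2 * (u x * deriv u x))) (Icc L x) := by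
    refine antitoneOn_of_hasDerivWithinAt_nonpos (convex_Icc _ _)
      (fun y _ ↦ (hderiv y).continuousAt.continuousWithinAt)
      (fun y _ ↦ (hderiv y).hasDerivWithinAt) fun y hy ↦ ?_
    replace hy := interior_subset hy
    have hmono : u y * deriv u y ≤ u x * deriv u x := h.monotoneOn_mul_deriv hL hy.1 hx hy.2
    push_cast
    linarith
  have hends : u x ^ 2 - x * (2 * (u x * deriv u x)) ≤ u L ^ 2 - L * (2 * (u x * deriv u x)) :=
    hanti ⟨le_rfl, hx⟩ ⟨hx, le_rfl⟩ hx
  linarith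

theorem pow_four_mul_le (h : IsDecayingOscillatorSolution L u) (hL : 0 ≤ L) (hx : L ≤ x) :
    u x ^ 4 * (1 + 8 * L * (x - L) ^ 3) ≤ u L ^ 4 := by
  have hxL : 0 ≤ x - L := sub_nonneg.2 hx
  set P := -(u x * deriv u x)
  have hP : 0 ≤ P := neg_nonneg.2 (h.mul_deriv_nonpos hL hx)
  have hslope : 2 * L * (x - L) * u x ^ 4 ≤ P ^ 2 :=
    calc 2 * L * (x - L) * u x ^ 4 ≤ (x ^ 2 - L ^ 2) * u x ^ 4 := by
          gcongr
          nlinarith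
      _ = u x ^ 2 * ((x ^ 2 - L ^ 2) * u x ^ 2) := by ring
      _ ≤ u x ^ 2 * deriv u x ^ 2 := by
          gcongr
          exact h.mul_sq_le_deriv_sq (hL.trans hx)
      _ = P ^ 2 := by ring
  calc u x ^ 4 * (1 + 8 * L * (x - L) ^ 3)
      = u x ^ 4 + 4 * (x - L) ^ 2 * (2 * L * (x - L) * u x ^ 4) := by ring
    _ ≤ u x ^ 4 + 4 * (x - L) ^ 2 * P ^ 2 := by gcongr
    _ ≤ (u x ^ 2 + 2 * (x - L) * P) ^ 2 := by
        linarith [mul_nonneg (mul_nonneg hxL hP) (sq_nonneg (u x))]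
    _ ≤ (u L ^ 2) ^ 2 := by
        gcongr
        exact h.sq_add_tangent_le hL hx
    _ = u L ^ 4 := by ring

theorem pow_four_mul_le_of_ge (h : IsDecayingOscillatorSolution (a ^ 3) u) (ha : 1 ≤ a)
    (hx : a ^ 3 ≤ x) :
    u x ^ 4 * (a ^ 2 * (1 + (a * (x - a ^ 3)) ^ 2)) ≤ 1152 * wkbEnergy (a ^ 3) u 0 ^ 2 := by
  have ha0 : 0 < a := by linarith
  set t := a * (x - a ^ 3) with ht
  have ht0 : 0 ≤ t := mul_nonneg ha0.le (sub_nonneg.2 hx)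
  have hweight : 1 + t ^ 2 ≤ 2 * (1 + 8 * t ^ 3) := by
    nlinarith [sq_nonneg (t - 1), mul_nonneg ht0 (sq_nonneg (t - 1)), mul_nonneg ht0 ht0]
  have hdecay : u x ^ 4 * (1 + 8 * t ^ 3) ≤ u (a ^ 3) ^ 4 := by
    have := h.pow_four_mul_le (pow_pos ha0 3).le hx
    rwa [show 8 * a ^ 3 * (x - a ^ 3) ^ 3 = 8 * t ^ 3 by rw [ht]; ring] at this
  have hturn : u (a ^ 3) ^ 2 * a ≤ 24 * wkbEnergy (a ^ 3) u 0 :=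
    h.sq_mul_le_of_wkbFreq_le ha (pow_pos ha0 3).le le_rfl (by simpa [wkbFreq] using ha0.le)
  calc u x ^ 4 * (a ^ 2 * (1 + t ^ 2)) ≤ u x ^ 4 * (a ^ 2 * (2 * (1 + 8 * t ^ 3))) := by gcongr
    _ = 2 * a ^ 2 * (u x ^ 4 * (1 + 8 * t ^ 3)) := by ring
    _ ≤ 2 * a ^ 2 * u (a ^ 3) ^ 4 := by gcongr
    _ = 2 * (u (a ^ 3) ^ 2 * a) ^ 2 := by ring
    _ ≤ 2 * (24 * wkbEnergy (a ^ 3) u 0) ^ 2 := by gcongr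
    _ = 1152 * wkbEnergy (a ^ 3) u 0 ^ 2 := by ring

theorem pow_four_mul_sq_le (h : IsDecayingOscillatorSolution (a ^ 3) u) (ha : 1 ≤ a)
    (hx : 0 ≤ x) : u x ^ 4 * a ^ 2 ≤ 1152 * wkbEnergy (a ^ 3) u 0 ^ 2 := by
  have ha0 : 0 ≤ a := by linarith
  rcases le_total x (a ^ 3) with hxL | hxL
  · refine le_trans ?_ (h.pow_four_mul_le_of_le ha hx hxL)
    gcongr
    exact le_mul_of_one_le_right (sq_nonneg _)
      (le_add_of_nonneg_right (mul_nonneg ha0 (sub_nonneg.2 hxL)))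
  · refine le_trans ?_ (h.pow_four_mul_le_of_ge ha hxL)
    gcongr
    exact le_mul_of_one_le_right (sq_nonneg _) (le_add_of_nonneg_right (sq_nonneg _))

end IsDecayingOscillatorSolution

end TurningPoint

section QuarticIntegral

theorem integral_inv_one_add_mul_sub {b c : ℝ} (hb : 0 ≤ b) (hc : 0 < c) :
    ∫ x in (0 : ℝ)..b, (1 + c * (b - x))⁻¹ = Real.log (1 + c * b) / c := by
  calc ∫ x in (0 : ℝ)..b, (1 + c * (b - x))⁻¹
      = ∫ x in (0 : ℝ)..b, (1 + c * b - c * x)⁻¹ := by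
        congr! 3
        ring
    _ = c⁻¹ * ∫ x in (1 : ℝ)..1 + c * b, x⁻¹ := by
        rw [intervalIntegral.integral_comp_sub_mul (fun x ↦ x⁻¹) hc.ne']
        simp
    _ = Real.log (1 + c * b) / c := by
        rw [integral_inv_of_pos one_pos (by positivity), div_one, inv_mul_eq_div]

theorem integrable_inv_one_add_mul_sub_sq {c : ℝ} (hc : c ≠ 0) (b : ℝ) :
    Integrable fun x : ℝ ↦ (1 + (c * (x - b)) ^ 2)⁻¹ :=
  (integrable_inv_one_add_sq.comp_mul_left' hc).comp_sub_right b

theorem integral_inv_one_add_mul_sub_sq {c : ℝ} (hc : 0 < c) (b : ℝ) :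
    ∫ x : ℝ, (1 + (c * (x - b)) ^ 2)⁻¹ = Real.pi / c := by
  rw [integral_sub_right_eq_self (fun x ↦ (1 + (c * x) ^ 2)⁻¹) b,
    Measure.integral_comp_mul_left (fun x ↦ (1 + x ^ 2)⁻¹) c, integral_univ_inv_one_add_sq,
    abs_of_pos (inv_pos.2 hc), smul_eq_mul, inv_mul_eq_div]

variable {a : ℝ} {u : ℝ → ℝ}

theorem IsOscillatorSolution.continuous {L : ℝ} (h : IsOscillatorSolution L u) : Continuous u :=
  h.differentiable.continuous

theorem IsOscillatorSolution.integrableOn_pow_four_Ioc {L b c : ℝ}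
    (h : IsOscillatorSolution L u) : IntegrableOn (fun x ↦ u x ^ 4) (Ioc b c) :=
  (h.continuous.pow 4).integrableOn_Ioc

theorem IsOscillatorSolution.integral_pow_four_le (h : IsOscillatorSolution (a ^ 3) u)
    (ha : 1 ≤ a) :
    ∫ x in Ioc 0 (a ^ 3), u x ^ 4 ≤
      1152 * wkbEnergy (a ^ 3) u 0 ^ 2 / a ^ 2 * (Real.log (1 + a ^ 4) / a) := by
  have ha0 : 0 < a := by linarith
  have hL : 0 ≤ a ^ 3 := by positivity
  have hpos : ∀ x ∈ Icc 0 (a ^ 3), 0 < 1 + a * (a ^ 3 - x) := fun x hx ↦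
    add_pos_of_pos_of_nonneg one_pos (mul_nonneg ha0.le (sub_nonneg.2 hx.2))
  have hcont : ContinuousOn (fun x ↦ (1 + a * (a ^ 3 - x))⁻¹) (uIcc 0 (a ^ 3)) :=
    ContinuousOn.inv₀ (by fun_prop) fun x hx ↦ (hpos x (uIcc_of_le hL ▸ hx)).ne'
  rw [show a ^ 4 = a * a ^ 3 by ring, ← integral_inv_one_add_mul_sub hL ha0,
    ← intervalIntegral.integral_of_le hL, ← intervalIntegral.integral_const_mul]
  refine intervalIntegral.integral_mono_on hL ((h.continuous.pow 4).intervalIntegrable _ _)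
    (hcont.intervalIntegrable.const_mul _) fun x hx ↦ ?_
  rw [← div_eq_mul_inv, div_div, le_div_iff₀ (mul_pos (pow_pos ha0 2) (hpos x hx))]
  exact h.pow_four_mul_le_of_le ha hx.1 hx.2

namespace IsDecayingOscillatorSolution

theorem pow_four_le_of_ge (h : IsDecayingOscillatorSolution (a ^ 3) u) (ha : 1 ≤ a) {x : ℝ}
    (hx : a ^ 3 ≤ x) :
    u x ^ 4 ≤ 1152 * wkbEnergy (a ^ 3) u 0 ^ 2 / a ^ 2 * (1 + (a * (x - a ^ 3)) ^ 2)⁻¹ := by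
  have hweight : 0 < a ^ 2 * (1 + (a * (x - a ^ 3)) ^ 2) :=
    mul_pos (pow_pos (zero_lt_one.trans_le ha) 2) (by positivity)
  rw [← div_eq_mul_inv, div_div, le_div_iff₀ hweight]
  exact h.pow_four_mul_le_of_ge ha hx

theorem integrableOn_pow_four_Ioi (h : IsDecayingOscillatorSolution (a ^ 3) u) (ha : 1 ≤ a) :
    IntegrableOn (fun x ↦ u x ^ 4) (Ioi (a ^ 3)) := by
  have hdom := (integrable_inv_one_add_mul_sub_sq (zero_lt_one.trans_le ha).ne' (a ^ 3)).const_mul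
    (1152 * wkbEnergy (a ^ 3) u 0 ^ 2 / a ^ 2)
  refine hdom.integrableOn.mono'
    (h.continuous.pow 4).aestronglyMeasurable
    (ae_restrict_of_forall_mem measurableSet_Ioi fun x hx ↦ ?_)
  rw [Real.norm_of_nonneg (by positivity)]
  exact h.pow_four_le_of_ge ha (le_of_lt hx)

theorem integral_pow_four_Ioi_le (h : IsDecayingOscillatorSolution (a ^ 3) u) (ha : 1 ≤ a) :
    ∫ x in Ioi (a ^ 3), u x ^ 4 ≤
      1152 * wkbEnergy (a ^ 3) u 0 ^ 2 / a ^ 2 * (Real.pi / a) := by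
  have ha0 : 0 < a := by linarith
  have hdom := (integrable_inv_one_add_mul_sub_sq ha0.ne' (a ^ 3)).const_mul
    (1152 * wkbEnergy (a ^ 3) u 0 ^ 2 / a ^ 2)
  rw [← integral_inv_one_add_mul_sub_sq ha0 (a ^ 3), ← integral_const_mul]
  exact (setIntegral_mono_on (h.integrableOn_pow_four_Ioi ha) hdom.integrableOn
    measurableSet_Ioi fun x hx ↦ h.pow_four_le_of_ge ha (le_of_lt hx)).trans
    (setIntegral_le_integral hdom (ae_of_all _ fun x ↦ by positivity))

theorem integrableOn_pow_four (h : IsDecayingOscillatorSolution (a ^ 3) u) (ha : 1 ≤ a) :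
    IntegrableOn (fun x ↦ u x ^ 4) (Ioi 0) := by
  rw [← Ioc_union_Ioi_eq_Ioi (pow_nonneg (zero_le_one.trans ha) 3)]
  exact h.integrableOn_pow_four_Ioc.union (h.integrableOn_pow_four_Ioi ha)

theorem integral_pow_four_le (h : IsDecayingOscillatorSolution (a ^ 3) u) (ha : 1 ≤ a) :
    ∫ x in Ioi 0, u x ^ 4 ≤
      1152 * wkbEnergy (a ^ 3) u 0 ^ 2 * (Real.log (1 + a ^ 4) + Real.pi) / a ^ 3 := by
  have hL : 0 ≤ a ^ 3 := pow_nonneg (zero_le_one.trans ha) 3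
  rw [← Ioc_union_Ioi_eq_Ioi hL, setIntegral_union (Ioc_disjoint_Ioi le_rfl) measurableSet_Ioi
    h.integrableOn_pow_four_Ioc (h.integrableOn_pow_four_Ioi ha)]
  refine (add_le_add (h.toIsOscillatorSolution.integral_pow_four_le ha)
    (h.integral_pow_four_Ioi_le ha)).trans_eq ?_
  field_simp

end IsDecayingOscillatorSolution

end QuarticIntegral

section Hermite

variable {k : ℕ} {L : ℝ}

theorem hasDerivAt_iteratedDeriv_exp_neg_sq (k : ℕ) (x : ℝ) :
    HasDerivAt (iteratedDeriv k fun y : ℝ ↦ Real.exp (-y ^ 2))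
      (iteratedDeriv (k + 1) (fun y : ℝ ↦ Real.exp (-y ^ 2)) x) x := by
  have hsmooth : ContDiff ℝ (k + 1) fun y : ℝ ↦ Real.exp (-y ^ 2) := by fun_prop
  rw [iteratedDeriv_succ]
  exact (hsmooth.differentiable_iteratedDeriv k (mod_cast k.lt_succ_self) x).hasDerivAt

theorem iteratedDeriv_one_exp_neg_sq :
    iteratedDeriv 1 (fun y : ℝ ↦ Real.exp (-y ^ 2)) = fun x ↦ -2 * x * Real.exp (-x ^ 2) := by
  ext x
  rw [iteratedDeriv_one]
  refine ((hasDerivAt_pow 2 x).neg.exp.congr_deriv ?_).deriv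
  simp only [Pi.neg_apply]
  push_cast
  ring

theorem iteratedDeriv_add_two_exp_neg_sq (k : ℕ) :
    iteratedDeriv (k + 2) (fun y : ℝ ↦ Real.exp (-y ^ 2)) = fun x ↦
      -2 * x * iteratedDeriv (k + 1) (fun y : ℝ ↦ Real.exp (-y ^ 2)) x -
        2 * (k + 1) * iteratedDeriv k (fun y : ℝ ↦ Real.exp (-y ^ 2)) x := by
  have hderiv := hasDerivAt_iteratedDeriv_exp_neg_sq
  induction k with
  | zero =>
    ext x
    have htwo : HasDerivAt (iteratedDeriv 1 fun y : ℝ ↦ Real.exp (-y ^ 2)) _ x := hderiv 1 x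
    rw [iteratedDeriv_one_exp_neg_sq] at htwo
    refine htwo.unique ((((hasDerivAt_id x).const_mul (-2)).mul (hderiv 0 x)).congr_deriv ?_)
    simp only [iteratedDeriv_zero, id, Nat.cast_zero, zero_add]
    ring
  | succ k ih =>
    ext x
    have hthree : HasDerivAt (iteratedDeriv (k + 2) fun y : ℝ ↦ Real.exp (-y ^ 2)) _ x :=
      hderiv (k + 2) x
    rw [ih] at hthree
    refine hthree.unique (((((hasDerivAt_id x).const_mul (-2)).mul (hderiv (k + 1) x)).sub
      ((hderiv k x).const_mul (2 * ((k : ℝ) + 1)))).congr_deriv ?_)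
    simp only [id]
    push_cast
    ring

/-- The normalizing constant `(-1)^k (k!)^{-1/2} 2^{-k/2} π^{-1/4}` of the `k`-th Hermite function,
including the sign of the Rodrigues formula. -/
def hermiteConst (k : ℕ) : ℝ :=
  (-1) ^ k * ((Nat.factorial k : ℝ) ^ (-(1 / 2 : ℝ)) * (2 : ℝ) ^ (-(k : ℝ) / 2) *
    Real.pi ^ (-(1 / 4 : ℝ)))

theorem hermiteConst_eq_neg_sqrt_mul (k : ℕ) :
    hermiteConst k = -(√(2 * (k + 1)) * hermiteConst (k + 1)) := by
  have hfac : ((Nat.factorial (k + 1) : ℕ) : ℝ) ^ (-(1 / 2 : ℝ)) =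
      (√(k + 1))⁻¹ * (Nat.factorial k : ℝ) ^ (-(1 / 2 : ℝ)) := by
    rw [Nat.factorial_succ, Nat.cast_mul, Real.mul_rpow (by positivity) (by positivity),
      Real.rpow_neg (by positivity), ← Real.sqrt_eq_rpow, Nat.cast_succ]
  have htwo : (2 : ℝ) ^ (-((k + 1 : ℕ) : ℝ) / 2) = (2 : ℝ) ^ (-(k : ℝ) / 2) * (√2)⁻¹ := by
    rw [Real.sqrt_eq_rpow, ← Real.rpow_neg zero_le_two, ← Real.rpow_add two_pos]
    congr 1
    push_cast
    ring
  rw [hermiteConst, hermiteConst, hfac, htwo, Real.sqrt_mul zero_le_two, pow_succ]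
  field_simp

theorem hermiteFun_eq (k : ℕ) (x : ℝ) : hermiteFun k x =
    hermiteConst k * Real.exp (x ^ 2 / 2) * iteratedDeriv k (fun y ↦ Real.exp (-y ^ 2)) x :=
  rfl

theorem hermiteFun_zero (x : ℝ) :
    hermiteFun 0 x = Real.pi ^ (-(1 / 4 : ℝ)) * Real.exp (-x ^ 2 / 2) := by
  have hexp : Real.exp (-x ^ 2 / 2) = Real.exp (x ^ 2 / 2) * Real.exp (-x ^ 2) := by
    rw [← Real.exp_add]
    ring_nf
  rw [hermiteFun, hexp]
  simp [mul_assoc]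

theorem sqrt_mul_hermiteFun_one (x : ℝ) : √2 * hermiteFun 1 x = 2 * x * hermiteFun 0 x := by
  have hconst := hermiteConst_eq_neg_sqrt_mul 0
  simp only [Nat.cast_zero, zero_add, mul_one] at hconst
  rw [hermiteFun_eq, hermiteFun_eq, iteratedDeriv_one_exp_neg_sq, iteratedDeriv_zero, hconst]
  ring

theorem sqrt_mul_hermiteFun_add_two (k : ℕ) (x : ℝ) : √(2 * (k + 2)) * hermiteFun (k + 2) x =
    2 * x * hermiteFun (k + 1) x - √(2 * (k + 1)) * hermiteFun k x := by
  have hconst : hermiteConst (k + 1) = -(√(2 * (k + 2)) * hermiteConst (k + 2)) := by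
    rw [hermiteConst_eq_neg_sqrt_mul (k + 1)]
    push_cast
    ring_nf
  have hsqrt : √(2 * (k + 1)) * hermiteConst k = -(2 * (k + 1) * hermiteConst (k + 1)) := by
    rw [hermiteConst_eq_neg_sqrt_mul k, mul_neg, ← mul_assoc, Real.mul_self_sqrt (by positivity)]
  simp only [hermiteFun_eq, iteratedDeriv_add_two_exp_neg_sq]
  linear_combination Real.exp (x ^ 2 / 2) *
    (iteratedDeriv k (fun y ↦ Real.exp (-y ^ 2)) x * (hsqrt - 2 * (k + 1) * hconst) -
      2 * x * iteratedDeriv (k + 1) (fun y ↦ Real.exp (-y ^ 2)) x * hconst)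

theorem hasDerivAt_hermiteFun (k : ℕ) (x : ℝ) :
    HasDerivAt (hermiteFun k) (x * hermiteFun k x - √(2 * (k + 1)) * hermiteFun (k + 1) x) x := by
  refine (((((hasDerivAt_pow 2 x).div_const 2).exp).const_mul (hermiteConst k)).mul
    (hasDerivAt_iteratedDeriv_exp_neg_sq k x)).congr_deriv ?_
  rw [hermiteFun_eq, hermiteFun_eq, hermiteConst_eq_neg_sqrt_mul k]
  push_cast
  ring

theorem hasDerivAt_hermiteFun_succ (k : ℕ) (x : ℝ) : HasDerivAt (hermiteFun (k + 1))
    (√(2 * (k + 1)) * hermiteFun k x - x * hermiteFun (k + 1) x) x := by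
  refine (hasDerivAt_hermiteFun (k + 1) x).congr_deriv ?_
  have hrec := sqrt_mul_hermiteFun_add_two k x
  push_cast
  rw [add_assoc, one_add_one_eq_two, hrec]
  ring

theorem deriv_hermiteFun (k : ℕ) :
    deriv (hermiteFun k) = fun x ↦ x * hermiteFun k x - √(2 * (k + 1)) * hermiteFun (k + 1) x :=
  funext fun x ↦ (hasDerivAt_hermiteFun k x).deriv

theorem isOscillatorSolution_hermiteFun (hL : L ^ 2 = 2 * k + 1) :
    IsOscillatorSolution L (hermiteFun k) where
  differentiable x := (hasDerivAt_hermiteFun k x).differentiableAt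
  hasDerivAt_deriv x := by
    rw [deriv_hermiteFun]
    refine (((hasDerivAt_id x).mul (hasDerivAt_hermiteFun k x)).sub
      ((hasDerivAt_hermiteFun_succ k x).const_mul _)).congr_deriv ?_
    have hsqrt : √(2 * (k + 1) : ℝ) ^ 2 = 2 * (k + 1) := Real.sq_sqrt (by positivity)
    simp only [id]
    rw [hL]
    linear_combination (-hermiteFun k x) * hsqrt

theorem tendsto_pow_mul_hermiteFun_zero (m : ℕ) :
    Tendsto (fun x ↦ x ^ m * hermiteFun 0 x) atTop (nhds 0) := by
  have hgauss := ((tendsto_rpow_abs_mul_exp_neg_mul_sq_cocompact one_half_pos m).mono_left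
    atTop_le_cocompact).const_mul (Real.pi ^ (-(1 / 4 : ℝ)))
  rw [mul_zero] at hgauss
  refine hgauss.congr' ?_
  filter_upwards [eventually_ge_atTop 0] with x hx
  rw [hermiteFun_zero, abs_of_nonneg hx, Real.rpow_natCast]
  ring_nf

theorem tendsto_pow_mul_hermiteFun (k m : ℕ) :
    Tendsto (fun x ↦ x ^ m * hermiteFun k x) atTop (nhds 0) := by
  induction k using Nat.twoStepInduction generalizing m with
  | zero => exact tendsto_pow_mul_hermiteFun_zero m
  | one =>
    have hlim := (tendsto_pow_mul_hermiteFun_zero (m + 1)).const_mul (2 / √2)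
    rw [mul_zero] at hlim
    refine hlim.congr fun x ↦ ?_
    field_simp
    linear_combination -x ^ m * sqrt_mul_hermiteFun_one x
  | more k ih₀ ih₁ =>
    have hlim := (((ih₁ (m + 1)).const_mul 2).sub ((ih₀ m).const_mul √(2 * (k + 1)))).const_mul
      (√(2 * (k + 2)))⁻¹
    simp only [mul_zero, sub_zero] at hlim
    refine hlim.congr fun x ↦ ?_
    rw [inv_mul_eq_iff_eq_mul₀ (by positivity)]
    linear_combination -x ^ m * sqrt_mul_hermiteFun_add_two k x

theorem hermiteFun_neg (k : ℕ) (x : ℝ) : hermiteFun k (-x) = (-1) ^ k * hermiteFun k x := by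
  have hiter := iteratedDeriv_comp_neg k (fun y : ℝ ↦ Real.exp (-y ^ 2)) (-x)
  simp only [neg_sq, neg_neg, smul_eq_mul] at hiter
  rw [hermiteFun_eq, hermiteFun_eq, neg_sq, hiter]
  ring

theorem abs_hermiteFun_abs (k : ℕ) (x : ℝ) : |hermiteFun k (|x|)| = |hermiteFun k x| := by
  rcases abs_choice x with hx | hx
  · rw [hx]
  · rw [hx, hermiteFun_neg, abs_mul, abs_neg_one_pow, one_mul]

theorem hermiteFun_zero_pow_four_mul_le_one (k : ℕ) : hermiteFun k 0 ^ 4 * (k + 1) ≤ 1 := by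
  induction k using Nat.twoStepInduction with
  | zero =>
    have hpi : (Real.pi ^ (-(1 / 4 : ℝ))) ≤ 1 :=
      Real.rpow_le_one_of_one_le_of_nonpos (by linarith [Real.pi_gt_three]) (by norm_num)
    simpa [hermiteFun_zero] using pow_le_one₀ (n := 4) (by positivity) hpi
  | one =>
    have hone : hermiteFun 1 0 = 0 := by simpa using sqrt_mul_hermiteFun_one 0
    simp [hone]
  | more k ih _ =>
    have hrec : (√(2 * (k + 2)) * hermiteFun (k + 2) 0) ^ 4 =
        (√(2 * (k + 1)) * hermiteFun k 0) ^ 4 := by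
      rw [sqrt_mul_hermiteFun_add_two, mul_zero, zero_mul, zero_sub, Even.neg_pow (by decide)]
    have hsqrt : ∀ t : ℝ, 0 ≤ t → √t ^ 4 = t ^ 2 := fun t ht ↦ by
      rw [show 4 = 2 * 2 from rfl, pow_mul, Real.sq_sqrt ht]
    rw [mul_pow, mul_pow, hsqrt _ (by positivity), hsqrt _ (by positivity)] at hrec
    refine le_of_mul_le_mul_left ?_ (by positivity : 0 < (2 * ((k : ℝ) + 2)) ^ 2)
    push_cast
    calc (2 * ((k : ℝ) + 2)) ^ 2 * (hermiteFun (k + 2) 0 ^ 4 * (k + 2 + 1))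
        = 4 * (((k : ℝ) + 1) * (k + 3)) * (hermiteFun k 0 ^ 4 * (k + 1)) := by
          linear_combination ((k : ℝ) + 3) * hrec
      _ ≤ 4 * (((k : ℝ) + 1) * (k + 3)) * 1 := by gcongr
      _ ≤ (2 * ((k : ℝ) + 2)) ^ 2 * 1 := by linarith

theorem wkbEnergy_hermiteFun_zero_le (hL0 : 0 < L) (hL : L ^ 2 = 2 * k + 1) :
    wkbEnergy L (hermiteFun k) 0 ≤ 3 := by
  have hvalue : L * hermiteFun k 0 ^ 2 ≤ 3 / 2 := by
    refine le_of_sq_le_sq ?_ (by norm_num)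
    calc (L * hermiteFun k 0 ^ 2) ^ 2 = L ^ 2 * hermiteFun k 0 ^ 4 := by ring
      _ ≤ 2 * (k + 1) * hermiteFun k 0 ^ 4 := by
          rw [hL]
          gcongr
          linarith
      _ ≤ (3 / 2) ^ 2 := by linarith [hermiteFun_zero_pow_four_mul_le_one k]
  have hslope : 2 * (k + 1) * hermiteFun (k + 1) 0 ^ 2 / L ≤ 3 / 2 := by
    have hsucc := hermiteFun_zero_pow_four_mul_le_one (k + 1)
    push_cast at hsucc
    refine le_of_sq_le_sq ?_ (by norm_num)
    rw [div_pow, hL, div_le_iff₀ (by positivity)]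
    refine le_of_mul_le_mul_right ?_ (by positivity : 0 < (k : ℝ) + 1 + 1)
    calc (2 * (k + 1) * hermiteFun (k + 1) 0 ^ 2) ^ 2 * ((k : ℝ) + 1 + 1)
        = 4 * ((k : ℝ) + 1) ^ 2 * (hermiteFun (k + 1) 0 ^ 4 * (k + 1 + 1)) := by ring
      _ ≤ 4 * ((k : ℝ) + 1) ^ 2 * 1 := by gcongr
      _ ≤ (3 / 2) ^ 2 * (2 * k + 1) * ((k : ℝ) + 1 + 1) := by
          linarith [sq_nonneg (k : ℝ), k.cast_nonneg (α := ℝ)]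
  rw [wkbEnergy, wkbFreq_zero hL0.le, (hasDerivAt_hermiteFun k 0).deriv, zero_mul, zero_sub, neg_sq,
    mul_pow, Real.sq_sqrt (by positivity)]
  linarith

theorem isDecayingOscillatorSolution_hermiteFun (hL : L ^ 2 = 2 * k + 1) :
    IsDecayingOscillatorSolution L (hermiteFun k) where
  toIsOscillatorSolution := isOscillatorSolution_hermiteFun hL
  tendsto_id_mul := by simpa using tendsto_pow_mul_hermiteFun k 1
  tendsto_deriv := by
    rw [deriv_hermiteFun]
    simpa using (tendsto_pow_mul_hermiteFun k 1).sub
      ((tendsto_pow_mul_hermiteFun (k + 1) 0).const_mul √(2 * (k + 1)))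

theorem exists_one_le_and_sq_pow_three_eq (k : ℕ) : ∃ a : ℝ, 1 ≤ a ∧ (a ^ 3) ^ 2 = 2 * k + 1 := by
  refine ⟨(2 * k + 1 : ℝ) ^ (1 / 6 : ℝ),
    Real.one_le_rpow (by linarith [k.cast_nonneg (α := ℝ)]) (by norm_num), ?_⟩
  rw [← pow_mul, ← Real.rpow_mul_natCast (by positivity)]
  norm_num

theorem abs_hermiteFun_le (k : ℕ) (x : ℝ) :
    |hermiteFun k x| ≤ 11 * (2 * k + 1 : ℝ) ^ (-(1 / 12 : ℝ)) := by
  obtain ⟨a, ha, hak⟩ := exists_one_le_and_sq_pow_three_eq k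
  have ha0 : 0 < a := by linarith
  have hfour : hermiteFun k (|x|) ^ 4 * a ^ 2 ≤ 11 ^ 4 :=
    calc hermiteFun k (|x|) ^ 4 * a ^ 2 ≤ 1152 * wkbEnergy (a ^ 3) (hermiteFun k) 0 ^ 2 :=
          (isDecayingOscillatorSolution_hermiteFun hak).pow_four_mul_sq_le ha (abs_nonneg x)
      _ ≤ 1152 * 3 ^ 2 := by
          gcongr
          · exact wkbEnergy_nonneg _ _ _
          · exact wkbEnergy_hermiteFun_zero_le (by positivity) hak
      _ ≤ 11 ^ 4 := by norm_num
  have hpow : ((2 * k + 1 : ℝ) ^ (-(1 / 12 : ℝ))) ^ 4 = (a ^ 2)⁻¹ := by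
    rw [← hak, ← Real.rpow_mul_natCast (by positivity), ← pow_mul, ← Real.rpow_natCast_mul ha0.le,
      ← Real.rpow_natCast, ← Real.rpow_neg ha0.le]
    norm_num
  refine le_of_pow_le_pow_left₀ four_ne_zero (by positivity) ?_
  rwa [mul_pow, hpow, ← abs_hermiteFun_abs, Even.pow_abs (by decide), ← div_eq_mul_inv,
    le_div_iff₀ (by positivity)]

theorem hermiteFun_pow_four_eq_comp_abs (k : ℕ) :
    (fun x ↦ hermiteFun k x ^ 4) = fun x ↦ hermiteFun k (|x|) ^ 4 := by
  ext x
  rw [← Even.pow_abs (by decide), ← abs_hermiteFun_abs, Even.pow_abs (by decide)]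

theorem integrable_hermiteFun_pow_four (k : ℕ) : Integrable fun x ↦ hermiteFun k x ^ 4 := by
  obtain ⟨a, ha, hak⟩ := exists_one_le_and_sq_pow_three_eq k
  rw [hermiteFun_pow_four_eq_comp_abs]
  refine (integrable_fun_norm_addHaar volume (f := fun x ↦ hermiteFun k x ^ 4)).2 ?_
  simpa using (isDecayingOscillatorSolution_hermiteFun hak).integrableOn_pow_four ha

theorem integral_hermiteFun_pow_four_le (k : ℕ) :
    ∫ x, hermiteFun k x ^ 4 ≤ 103680 * ((1 + Real.log (2 * k + 1)) / √(2 * k + 1)) := by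
  obtain ⟨a, ha, hak⟩ := exists_one_le_and_sq_pow_three_eq k
  have hL : 0 < a ^ 3 := pow_pos (zero_lt_one.trans_le ha) 3
  have hsqrt : √(2 * k + 1) = a ^ 3 := by rw [← hak, Real.sqrt_sq hL.le]
  have hlog : Real.log (1 + a ^ 4) ≤ 1 + Real.log (2 * k + 1) :=
    calc Real.log (1 + a ^ 4) ≤ Real.log (2 * (a ^ 3) ^ 2) := by
          gcongr
          linarith [one_le_pow₀ ha (n := 6), pow_le_pow_right₀ ha (by norm_num : 4 ≤ 6),
            pow_mul a 3 2]
      _ ≤ 1 + Real.log (2 * k + 1) := by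
          rw [hak, Real.log_mul two_ne_zero (by positivity)]
          linarith [Real.log_two_lt_d9]
  have hlog_nonneg : 0 ≤ Real.log (2 * k + 1) :=
    Real.log_nonneg (by linarith [k.cast_nonneg (α := ℝ)])
  have hhalf := (isDecayingOscillatorSolution_hermiteFun hak).integral_pow_four_le ha
  rw [hermiteFun_pow_four_eq_comp_abs, integral_comp_abs (f := fun x ↦ hermiteFun k x ^ 4), hsqrt]
  calc 2 * ∫ x in Ioi 0, hermiteFun k x ^ 4
      ≤ 2 * (1152 * wkbEnergy (a ^ 3) (hermiteFun k) 0 ^ 2 *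
          (Real.log (1 + a ^ 4) + Real.pi) / a ^ 3) := by gcongr
    _ ≤ 2 * (1152 * 3 ^ 2 * (5 * (1 + Real.log (2 * k + 1))) / a ^ 3) := by
        gcongr 2 * (1152 * ?_ ^ 2 * ?_ / _)
        · have := Real.log_nonneg (by linarith [one_le_pow₀ ha (n := 4)] : 1 ≤ 1 + a ^ 4)
          positivity
        · exact wkbEnergy_nonneg _ _ _
        · exact wkbEnergy_hermiteFun_zero_le hL hak
        · linarith [Real.pi_lt_four]
    _ = 103680 * ((1 + Real.log (2 * k + 1)) / a ^ 3) := by ring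

end Hermite

section EuclideanProduct

theorem measurableEmbedding_ofLp_euclideanSpace {ι : Type*} :
    MeasurableEmbedding (WithLp.ofLp : EuclideanSpace ℝ ι → ι → ℝ) :=
  (MeasurableEquiv.toLp 2 (ι → ℝ)).symm.measurableEmbedding

variable {ι : Type*} [Fintype ι]

theorem integrable_euclideanSpace_prod {f : ι → ℝ → ℝ} (hf : ∀ i, Integrable (f i)) :
    Integrable fun x : EuclideanSpace ℝ ι ↦ ∏ i, f i (x i) :=
  ((PiLp.volume_preserving_ofLp ι).integrable_comp_emb
    measurableEmbedding_ofLp_euclideanSpace).2 (Integrable.fintype_prod hf)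

theorem integral_euclideanSpace_prod (f : ι → ℝ → ℝ) :
    ∫ x : EuclideanSpace ℝ ι, ∏ i, f i (x i) = ∏ i, ∫ t, f i t := by
  rw [← integral_fintype_prod_volume_eq_prod]
  exact (PiLp.volume_preserving_ofLp ι).integral_comp measurableEmbedding_ofLp_euclideanSpace
    fun y : ι → ℝ ↦ ∏ i, f i (y i)

theorem sum_le_card_mul_prod {a : ι → ℝ} (ha : ∀ i, 1 ≤ a i) :
    ∑ i, a i ≤ Fintype.card ι * ∏ i, a i := by
  rw [← nsmul_eq_mul]
  refine Finset.sum_le_card_nsmul _ _ _ fun i _ ↦ ?_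
  simpa only [max_eq_left (ha _)] using Finset.le_prod_max_one (Finset.mem_univ i) a

end EuclideanProduct

theorem eLpNorm_natCast_eq_of_even {α : Type*} [MeasurableSpace α] {μ : Measure α} {f : α → ℝ}
    {p : ℕ} (hp : p ≠ 0) (heven : Even p) (hf : Integrable (fun x ↦ f x ^ p) μ) :
    eLpNorm f p μ = ENNReal.ofReal ((∫ x, f x ^ p ∂μ) ^ (1 / p : ℝ)) := by
  rw [eLpNorm_eq_lintegral_rpow_enorm_toReal (mod_cast hp) (ENNReal.natCast_ne_top p),
    ← ENNReal.ofReal_rpow_of_nonneg (integral_nonneg fun x ↦ heven.pow_nonneg _) (by positivity),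
    ofReal_integral_eq_lintegral_ofReal hf (ae_of_all _ fun x ↦ heven.pow_nonneg _)]
  simp only [ENNReal.toReal_natCast, ENNReal.rpow_natCast, ← heven.pow_abs (f _),
    ENNReal.ofReal_pow (abs_nonneg _), Real.enorm_eq_ofReal_abs]

section HermiteTensor

variable {ι : Type*} [Fintype ι]

/-- The tensorized Hermite function `∏ i, e_{n i}(x i)`, an eigenfunction of the harmonic
oscillator on `ℝ^ι`. -/
def hermiteTensor (n : ι → ℕ) (x : EuclideanSpace ℝ ι) : ℝ :=
  ∏ i, hermiteFun (n i) (x i)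

/-- The frequency of `hermiteTensor n`, that is, the square root of its eigenvalue
`∑ i, (2 n i + 1)`. -/
def hermiteFreq (n : ι → ℕ) : ℝ :=
  √(∑ i, (2 * n i + 1 : ℝ))

theorem hermiteFreq_sq (n : ι → ℕ) : hermiteFreq n ^ 2 = ∑ i, (2 * n i + 1 : ℝ) :=
  Real.sq_sqrt (Finset.sum_nonneg fun i _ ↦ by positivity)

theorem hermiteFreq_pos [Nonempty ι] (n : ι → ℕ) : 0 < hermiteFreq n :=
  Real.sqrt_pos.2 (Finset.sum_pos (fun i _ ↦ by positivity) Finset.univ_nonempty)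

theorem prod_two_mul_add_one_rpow_neg_le [Nonempty ι] (n : ι → ℕ) {s : ℝ} (hs : 0 ≤ s) :
    ∏ i, (2 * n i + 1 : ℝ) ^ (-s) ≤ Fintype.card ι ^ s * hermiteFreq n ^ (-(2 * s)) := by
  have hfreq := hermiteFreq_pos n
  have hcard : (0 : ℝ) < Fintype.card ι := mod_cast Fintype.card_pos
  have hprod : hermiteFreq n ^ 2 / Fintype.card ι ≤ ∏ i, (2 * n i + 1 : ℝ) := by
    rw [hermiteFreq_sq, div_le_iff₀' hcard]
    exact sum_le_card_mul_prod fun i ↦ by linarith [(n i).cast_nonneg (α := ℝ)]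
  calc ∏ i, (2 * n i + 1 : ℝ) ^ (-s) = (∏ i, (2 * n i + 1 : ℝ)) ^ (-s) :=
        Real.finsetProd_rpow _ _ (fun i _ ↦ by positivity) _
    _ ≤ (hermiteFreq n ^ 2 / Fintype.card ι) ^ (-s) :=
        Real.rpow_le_rpow_of_nonpos (by positivity) hprod (neg_nonpos.2 hs)
    _ = Fintype.card ι ^ s * hermiteFreq n ^ (-(2 * s)) := by
        rw [Real.div_rpow (by positivity) hcard.le, Real.rpow_neg hcard.le, div_inv_eq_mul,
          mul_comm, ← Real.rpow_natCast_mul hfreq.le]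
        push_cast
        rw [mul_neg]

theorem abs_hermiteTensor_le [Nonempty ι] (n : ι → ℕ) (x : EuclideanSpace ℝ ι) :
    |hermiteTensor n x| ≤
      11 ^ Fintype.card ι * Fintype.card ι ^ (1 / 12 : ℝ) * hermiteFreq n ^ (-(1 / 6 : ℝ)) :=
  calc |hermiteTensor n x| = ∏ i, |hermiteFun (n i) (x i)| := Finset.abs_prod _ _
    _ ≤ ∏ i, 11 * (2 * n i + 1 : ℝ) ^ (-(1 / 12 : ℝ)) :=
        Finset.prod_le_prod (fun i _ ↦ abs_nonneg _) fun i _ ↦ abs_hermiteFun_le _ _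
    _ = 11 ^ Fintype.card ι * ∏ i, (2 * n i + 1 : ℝ) ^ (-(1 / 12 : ℝ)) := by
        rw [Finset.prod_mul_distrib, Finset.prod_const, Finset.card_univ]
    _ ≤ 11 ^ Fintype.card ι *
          (Fintype.card ι ^ (1 / 12 : ℝ) * hermiteFreq n ^ (-(2 * (1 / 12) : ℝ))) := by
        gcongr
        exact prod_two_mul_add_one_rpow_neg_le n (by norm_num)
    _ = _ := by
        rw [← mul_assoc]
        norm_num

theorem integrable_hermiteTensor_pow_four (n : ι → ℕ) :
    Integrable fun x ↦ hermiteTensor n x ^ 4 := by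
  simp only [hermiteTensor, ← Finset.prod_pow]
  exact integrable_euclideanSpace_prod fun i ↦ integrable_hermiteFun_pow_four (n i)

theorem one_le_four_mul_log_hermiteFreq [Nontrivial ι] (n : ι → ℕ) :
    1 ≤ 4 * Real.log (hermiteFreq n) := by
  have hcard : (2 : ℝ) ≤ Fintype.card ι := mod_cast Fintype.one_lt_card
  have htwo : 2 ≤ hermiteFreq n ^ 2 := by
    rw [hermiteFreq_sq]
    calc (2 : ℝ) ≤ ∑ _i : ι, 1 := by simpa using hcard
      _ ≤ ∑ i, (2 * n i + 1 : ℝ) := by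
          gcongr with i
          linarith [(n i).cast_nonneg (α := ℝ)]
  have hlog := Real.log_le_log two_pos htwo
  rw [Real.log_pow] at hlog
  push_cast at hlog
  linarith [Real.log_two_gt_d9]

theorem one_add_log_le_six_mul_log_hermiteFreq [Nontrivial ι] (n : ι → ℕ) (i : ι) :
    1 + Real.log (2 * n i + 1) ≤ 6 * Real.log (hermiteFreq n) := by
  have hterm : (2 * n i + 1 : ℝ) ≤ hermiteFreq n ^ 2 := by
    rw [hermiteFreq_sq]
    exact Finset.single_le_sum (f := fun i ↦ (2 * n i + 1 : ℝ)) (fun i _ ↦ by positivity)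
      (Finset.mem_univ i)
  have hlog := Real.log_le_log (by positivity) hterm
  rw [Real.log_pow] at hlog
  push_cast at hlog
  linarith [one_le_four_mul_log_hermiteFreq n]

theorem integral_hermiteTensor_pow_four_le [Nontrivial ι] (n : ι → ℕ) :
    ∫ x, hermiteTensor n x ^ 4 ≤ (103680 * (6 * Real.log (hermiteFreq n))) ^ Fintype.card ι *
      (Fintype.card ι ^ (1 / 2 : ℝ) * hermiteFreq n ^ (-1 : ℝ)) := by
  have hlog : 1 ≤ 6 * Real.log (hermiteFreq n) := by
    linarith [one_le_four_mul_log_hermiteFreq n]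
  calc ∫ x, hermiteTensor n x ^ 4 = ∏ i, ∫ t, hermiteFun (n i) t ^ 4 := by
        simp only [hermiteTensor, ← Finset.prod_pow]
        exact integral_euclideanSpace_prod fun i t ↦ hermiteFun (n i) t ^ 4
    _ ≤ ∏ i, 103680 * (6 * Real.log (hermiteFreq n)) * (2 * n i + 1 : ℝ) ^ (-(1 / 2) : ℝ) := by
        refine Finset.prod_le_prod (fun i _ ↦ integral_nonneg fun t ↦ by positivity) fun i _ ↦ ?_
        rw [Real.rpow_neg (by positivity), ← Real.sqrt_eq_rpow, mul_assoc, ← div_eq_mul_inv]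
        refine (integral_hermiteFun_pow_four_le (n i)).trans ?_
        gcongr
        exact one_add_log_le_six_mul_log_hermiteFreq n i
    _ = (103680 * (6 * Real.log (hermiteFreq n))) ^ Fintype.card ι *
          ∏ i, (2 * n i + 1 : ℝ) ^ (-(1 / 2) : ℝ) := by
        rw [Finset.prod_mul_distrib, Finset.prod_const, Finset.card_univ]
    _ ≤ _ := by
        gcongr
        simpa using prod_two_mul_add_one_rpow_neg_le n (one_half_pos (α := ℝ)).le

theorem eLpNorm_four_hermiteTensor_le [Nontrivial ι] {s : ℝ} (hs : Fintype.card ι / 4 ≤ s)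
    (n : ι → ℕ) :
    eLpNorm (hermiteTensor n) 4 volume ≤ ENNReal.ofReal
      (103680 ^ (Fintype.card ι / 4 : ℝ) * 6 ^ s * Fintype.card ι ^ (1 / 8 : ℝ) *
        hermiteFreq n ^ (-(1 / 4 : ℝ)) * Real.log (hermiteFreq n) ^ s) := by
  have hfreq := hermiteFreq_pos n
  have hlog : 1 ≤ 6 * Real.log (hermiteFreq n) := by
    linarith [one_le_four_mul_log_hermiteFreq n]
  have hnorm := eLpNorm_natCast_eq_of_even four_ne_zero (by decide)
    (integrable_hermiteTensor_pow_four n)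
  rw [Nat.cast_ofNat] at hnorm
  rw [hnorm]
  refine ENNReal.ofReal_le_ofReal ?_
  calc (∫ x, hermiteTensor n x ^ 4) ^ (1 / (4 : ℕ) : ℝ)
      ≤ ((103680 * (6 * Real.log (hermiteFreq n))) ^ Fintype.card ι *
          (Fintype.card ι ^ (1 / 2 : ℝ) * hermiteFreq n ^ (-1 : ℝ))) ^ (1 / (4 : ℕ) : ℝ) := by
        gcongr
        exact integral_hermiteTensor_pow_four_le n
    _ = 103680 ^ (Fintype.card ι / 4 : ℝ) * (6 * Real.log (hermiteFreq n)) ^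
          (Fintype.card ι / 4 : ℝ) * (Fintype.card ι ^ (1 / 8 : ℝ) *
            hermiteFreq n ^ (-(1 / 4 : ℝ))) := by
        rw [Real.mul_rpow (by positivity) (by positivity),
          Real.mul_rpow (by positivity) (by positivity), ← Real.rpow_natCast_mul (by positivity),
          Real.mul_rpow (by positivity) (by positivity), ← Real.rpow_mul (by positivity),
          ← Real.rpow_mul (by positivity)]
        norm_num [div_eq_mul_inv]
    _ ≤ 103680 ^ (Fintype.card ι / 4 : ℝ) * (6 * Real.log (hermiteFreq n)) ^ s *
          (Fintype.card ι ^ (1 / 8 : ℝ) * hermiteFreq n ^ (-(1 / 4 : ℝ))) := by gcongr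
    _ = _ := by
        rw [Real.mul_rpow (by norm_num) (by linarith)]
        ring

theorem eLpNorm_top_hermiteTensor_le [Nonempty ι] (n : ι → ℕ) :
    eLpNorm (hermiteTensor n) ∞ volume ≤ ENNReal.ofReal
      (11 ^ Fintype.card ι * Fintype.card ι ^ (1 / 12 : ℝ) * hermiteFreq n ^ (-(1 / 6 : ℝ))) := by
  rw [eLpNorm_exponent_top]
  exact eLpNormEssSup_le_of_ae_bound (ae_of_all _ (abs_hermiteTensor_le n))

end HermiteTensor

theorem hermite3_eq_hermiteTensor (n : Fin 3 → ℕ) : hermite3 n = hermiteTensor n :=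
  rfl

theorem lam3_eq_hermiteFreq (n : Fin 3 → ℕ) : lam3 n = hermiteFreq n := by
  rw [lam3, hermiteFreq, Finset.sum_add_distrib, Finset.mul_sum]
  norm_num

theorem statement_8_general {ι : Type*} [Fintype ι] [Nontrivial ι] {s : ℝ}
    (hs : Fintype.card ι / 4 ≤ s) :
    ∃ C : ℝ, 0 < C ∧ ∀ n : ι → ℕ,
      eLpNorm (hermiteTensor n) 4 volume ≤
        ENNReal.ofReal (C * hermiteFreq n ^ (-(1/4 : ℝ)) * Real.log (hermiteFreq n) ^ s) ∧
      eLpNorm (hermiteTensor n) ∞ volume ≤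
        ENNReal.ofReal (C * hermiteFreq n ^ (-(1/6 : ℝ))) := by
  set C₁ : ℝ := 103680 ^ (Fintype.card ι / 4 : ℝ) * 6 ^ s * Fintype.card ι ^ (1 / 8 : ℝ)
  set C₂ : ℝ := 11 ^ Fintype.card ι * Fintype.card ι ^ (1 / 12 : ℝ)
  refine ⟨max C₁ C₂, lt_max_of_lt_left (by positivity), fun n ↦ ?_⟩
  have hfreq := hermiteFreq_pos n
  have hlog : 0 ≤ Real.log (hermiteFreq n) := by linarith [one_le_four_mul_log_hermiteFreq n]
  constructor
  · refine (eLpNorm_four_hermiteTensor_le hs n).trans ?_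
    gcongr
    exact le_max_left C₁ C₂
  · refine (eLpNorm_top_hermiteTensor_le n).trans ?_
    gcongr
    exact le_max_right C₁ C₂

/-- Dispersive bounds for the tensorized Hermite functions on `ℝ³`:
`‖h_n‖_{L⁴} ≤ C λ_n^{-1/4} (log λ_n)³` and `‖h_n‖_{L^∞} ≤ C λ_n^{-1/6}`. -/
theorem statement_8 :
    ∃ C : ℝ, 0 < C ∧ ∀ n : Fin 3 → ℕ,
      eLpNorm (hermite3 n) 4 volume ≤
        ENNReal.ofReal (C * lam3 n ^ (-(1/4 : ℝ)) * Real.log (lam3 n) ^ 3) ∧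
      eLpNorm (hermite3 n) ∞ volume ≤
        ENNReal.ofReal (C * lam3 n ^ (-(1/6 : ℝ))) := by
  simpa only [Real.rpow_natCast, hermite3_eq_hermiteTensor, lam3_eq_hermiteFreq] using
    statement_8_general (ι := Fin 3) (s := (3 : ℕ)) (by norm_num)

end
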